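/- Let x_{n−1} ≺ … ≺ x_1 ≺ y_{n−1} ≺ … ≺ y_1 ≺ z_{n−1} ≺ … ≺ z_1 be pairwise distinct points of P ordered anticlockwise on the circle (with P containing enough further points to choose right-side n-tuples for the determinant quotients). For positive integers m, l, p with m + l + p = n, set Θ(m,l,p) = E(x^{m+1}, y^{l−1}, z^{p−1} | y_l, z_p) · E(x^{m−1}, y^{l+1}, z^{p−1} | z_p, x_m) · E(x^{m−1}, y^{l−1}, z^{p+1} | x_m, y_l) ∈ Q_n(P). Then for all triples of positive integers (m,l,p) and (m',l',p') with m+l+p = m'+l'+p' = n and l ≥ l': (i) if (m,l,p) = (m',l',p') or l > l'+1, then [Θ(m,l,p), Θ(m',l',p')] = 0; (ii) if l = l'+1, then [Θ(m,l,p), Θ(m',l',p')] equals 1 if m = m', equals −1 if m' = m+1, and equals 0 otherwise. -/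

import Mathlib

noncomputable section

open scoped Classical
open MvPolynomial

set_option maxHeartbeats 1000000
set_option synthInstance.maxHeartbeats 400000

instance fact01 : Fact ((0:ℝ) < 1) := ⟨one_pos⟩

/-- The circle, modelled as `ℝ/ℤ`. -/
abbrev Circle1 : Type := AddCircle (1:ℝ)

/-- The coordinate in `[0,1)` of the point `x` of the circle obtained after removing the
point `o` and identifying the complement of `o` with an interval. -/
def coordAt (o x : Circle1) : ℝ := ((AddCircle.equivIco 1 0) (x - o) : ℝ)

/-- The sign `△` of a real number, as a rational number in `{-1, 0, 1}`. -/
def sgnQ (a : ℝ) : ℚ := if a < 0 then -1 else if a = 0 then 0 else 1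

/-- The linking number `J(rx, sy)` of the chords `rx` and `sy`, computed using the
cut point `o`. -/
def linkingAt (o r x s y : Circle1) : ℚ :=
  (1/2) * (sgnQ (coordAt o r - coordAt o x) * sgnQ (coordAt o r - coordAt o y)
        * sgnQ (coordAt o y - coordAt o x)
      - sgnQ (coordAt o r - coordAt o x) * sgnQ (coordAt o r - coordAt o s)
        * sgnQ (coordAt o s - coordAt o x))

lemma circle1_infinite : Infinite Circle1 := by
  have h : (Set.Ico (0:ℝ) (0+1)).Infinite := Set.Ico_infinite (by norm_num)
  haveI := h.to_subtype
  exact Infinite.of_injective (fun q : Set.Ico (0:ℝ) (0+1) => (AddCircle.equivIco 1 0).symm q)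
    ((AddCircle.equivIco 1 0).symm.injective)

lemma exists_cut (r x s y : Circle1) :
    ∃ o : Circle1, o ≠ r ∧ o ≠ x ∧ o ≠ s ∧ o ≠ y := by
  haveI : Infinite Circle1 := circle1_infinite
  have hfin : ({r, x, s, y} : Set Circle1).Finite :=
    (((Set.finite_singleton y).insert s).insert x).insert r
  obtain ⟨o, ho⟩ := hfin.infinite_compl.nonempty
  simp only [Set.mem_compl_iff, Set.mem_insert_iff, Set.mem_singleton_iff, not_or] at ho
  exact ⟨o, ho.1, ho.2.1, ho.2.2.1, ho.2.2.2⟩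

/-- The linking number `J(rx, sy)` of the chords `rx` and `sy` (computed with respect to
some cut point distinct from the four points; by the independence of the choice this is
the linking number). -/
def linkQ (r x s y : Circle1) : ℚ := linkingAt (exists_cut r x s y).choose r x s y

/-- The set of points of the circle `l`, listed in anticlockwise (cyclic) order:
there is a cut point `o` avoiding them such that the induced coordinates are
strictly increasing along the list. -/
def AnticlockwiseList (l : List Circle1) : Prop :=
  ∃ o : Circle1, (∀ p ∈ l, p ≠ o) ∧ (l.map (coordAt o)).Chain' (· < ·)

/-- Index type for the generators `xy` of the swapping ring of `P`
(one generator for each ordered pair of distinct points; the generators `xx`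
are identified with `0`). -/
abbrev SwapIdx (P : Set Circle1) : Type := {q : (↥P) × (↥P) // q.1 ≠ q.2}

/-- The swapping ring `Z(P)`: the polynomial ring over `K` on the generators `xy`,
`x ≠ y ∈ P` (this realizes the commutative ring generated by all ordered pairs `xy`
subject to the relations `xx = 0`). -/
abbrev SwapRing (K : Type) [Field K] (P : Set Circle1) : Type := MvPolynomial (SwapIdx P) K

/-- The generator `xy` of the swapping ring (equal to `0` when `x = y`). -/
def gen (K : Type) [Field K] (P : Set Circle1) (x y : ↥P) : SwapRing K P :=
  if h : x ≠ y then MvPolynomial.X (⟨(x, y), h⟩ : SwapIdx P) else 0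

/-- The value of the `(c1,c2)`-swapping bracket on two generators `rx` and `sy`:
`J(rx,sy) • (c1 • ry·sx + c2 • rx·sy)`. -/
def genBr (K : Type) [Field K] (P : Set Circle1) (c1 c2 : K) (g g' : SwapIdx P) :
    SwapRing K P :=
  ((linkQ g.1.1.1 g.1.2.1 g'.1.1.1 g'.1.2.1 : ℚ) : K) •
    (c1 • (gen K P g.1.1 g'.1.2 * gen K P g'.1.1 g.1.2)
      + c2 • (gen K P g.1.1 g.1.2 * gen K P g'.1.1 g'.1.2))

/-- The `(c1,c2)`-swapping bracket on `Z(P)`: the biderivation extending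
`{rx, sy} = J(rx,sy)·(c1·ry·sx + c2·rx·sy)` by the Leibniz rule in each argument.
The swapping bracket is the case `c1 = 1, c2 = 0`. -/
def swapBr (K : Type) [Field K] (P : Set Circle1) (c1 c2 : K) (a b : SwapRing K P) :
    SwapRing K P :=
  (MvPolynomial.mkDerivation K
    (fun g : SwapIdx P => (MvPolynomial.mkDerivation K (genBr K P c1 c2 g)) b)) a

/-- `Δ((x_1,…,x_m),(y_1,…,y_m)) = det (x_i y_j)` in the swapping ring. -/
def Dmat (K : Type) [Field K] (P : Set Circle1) (m : ℕ) (xs ys : Fin m → ↥P) :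
    SwapRing K P :=
  Matrix.det (Matrix.of fun i j => gen K P (xs i) (ys j))

/-- The ideal `R_n(P)` of `Z(P)` generated by all `(n+1)×(n+1)` determinants
`Δ((x_1,…,x_{n+1}),(y_1,…,y_{n+1}))`. -/
def Rideal (K : Type) [Field K] (P : Set Circle1) (n : ℕ) : Ideal (SwapRing K P) :=
  Ideal.span {D : SwapRing K P | ∃ xs ys : Fin (n+1) → ↥P, D = Dmat K P (n+1) xs ys}

/-- The rank `n` swapping ring `Z_n(P) = Z(P)/R_n(P)`. -/
abbrev ZnRing (K : Type) [Field K] (P : Set Circle1) (n : ℕ) : Type :=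
  SwapRing K P ⧸ Rideal K P n

/-- The quotient map `Z(P) → Z_n(P)`. -/
def toZn (K : Type) [Field K] (P : Set Circle1) (n : ℕ) :
    SwapRing K P →+* ZnRing K P n := Ideal.Quotient.mk (Rideal K P n)

/-- The total fraction ring `Q_n(P)` of the rank `n` swapping ring. -/
abbrev QnRing (K : Type) [Field K] (P : Set Circle1) (n : ℕ) : Type :=
  Localization (nonZeroDivisors (ZnRing K P n))

/-- The canonical map `Z(P) → Q_n(P)`. -/
def toQn (K : Type) [Field K] (P : Set Circle1) (n : ℕ) :
    SwapRing K P →+* QnRing K P n :=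
  (algebraMap (ZnRing K P n) (QnRing K P n)).comp (toZn K P n)

/-- `Bq` is the extension to the total fraction ring `Q_n(P)` of the `(c1,c2)`-swapping
bracket of the rank `n` swapping algebra: it agrees with the swapping bracket on the image
of `Z(P)` and satisfies the Leibniz rule in both arguments (these properties determine it
uniquely). -/
def IsQnBracket (K : Type) [Field K] (P : Set Circle1) (n : ℕ) (c1 c2 : K)
    (Bq : QnRing K P n → QnRing K P n → QnRing K P n) : Prop :=
  (∀ a b : SwapRing K P,
      Bq (toQn K P n a) (toQn K P n b) = toQn K P n (swapBr K P c1 c2 a b)) ∧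
  (∀ a b c : QnRing K P n, Bq (a * b) c = a * Bq b c + b * Bq a c) ∧
  (∀ a b c : QnRing K P n, Bq a (b * c) = b * Bq a c + c * Bq a b)

/-- The `n`-tuple `(x_1, …, x_a, y_1, …, y_b, z_1, …, z_{n-a-b})` built from three
families of points (families are indexed from `0`, i.e. `x 0 = x_1`). -/
def rows3 {α : Type*} {n : ℕ} (x y z : ℕ → α) (a b : ℕ) : Fin n → α :=
  fun i => if (i : ℕ) < a then x (i : ℕ)
    else if (i : ℕ) < a + b then y ((i : ℕ) - a)
    else z ((i : ℕ) - (a + b))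

/-- The `n`-tuple `(x_1, …, x_a, y_1, …, y_b, z_1, …, z_{n-1-a-b}, w)` built from three
families of points and a final point `w`. -/
def rows3s {α : Type*} {n : ℕ} (x y z : ℕ → α) (a b : ℕ) (w : α) : Fin n → α :=
  fun i => if (i : ℕ) < a then x (i : ℕ)
    else if (i : ℕ) < a + b then y ((i : ℕ) - a)
    else if (i : ℕ) < n - 1 then z ((i : ℕ) - (a + b))
    else w

/-- The `n`-tuple `(x_1, …, x_{n-1}, t)`. -/
def snocTup {α : Type*} {n : ℕ} (x : ℕ → α) (t : α) : Fin n → α :=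
  fun i => if (i : ℕ) < n - 1 then x (i : ℕ) else t

/-- The list `f_a, f_{a-1}, …, f_1` (descending enumeration). -/
def descPts (f : ℕ → Circle1) (a : ℕ) : List Circle1 := ((List.range a).map f).reverse

/-- The list `f_1, f_2, …, f_a` (ascending enumeration). -/
def ascPts (f : ℕ → Circle1) (a : ℕ) : List Circle1 := (List.range a).map f

/-- The `(n×n)`-determinant quotient `Δ(numR, v)/Δ(denR, v)` as an element of the total
fraction ring `Q_n(P)`. -/
def EQuot (K : Type) [Field K] (P : Set Circle1) (n : ℕ)
    (numR denR v : Fin n → ↥P)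
    (h : toZn K P n (Dmat K P n denR v) ∈ nonZeroDivisors (ZnRing K P n)) :
    QnRing K P n :=
  Localization.mk (toZn K P n (Dmat K P n numR v)) ⟨toZn K P n (Dmat K P n denR v), h⟩


/-- The image `Θ(m,l,p)` under the homomorphism `θ` of the `(m,l,p)`-triple ratio of the
triangle `xyz`:
`E(x^{m+1},y^{l-1},z^{p-1} | y_l, z_p) · E(x^{m-1},y^{l+1},z^{p-1} | z_p, x_m)
  · E(x^{m-1},y^{l-1},z^{p+1} | x_m, y_l)`,
computed with the right-side `n`-tuple `v`.  (Families are indexed from `0`, so `x_m` is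
`x (m-1)`, etc.) -/
def thetaTri (K : Type) [Field K] (P : Set Circle1) (n : ℕ) (x y z : ℕ → ↥P)
    (m l p : ℕ) (v : Fin n → ↥P)
    (h1 : toZn K P n (Dmat K P n (rows3s x y z (m+1) (l-1) (z (p-1))) v)
          ∈ nonZeroDivisors (ZnRing K P n))
    (h2 : toZn K P n (Dmat K P n (rows3s x y z (m-1) (l+1) (x (m-1))) v)
          ∈ nonZeroDivisors (ZnRing K P n))
    (h3 : toZn K P n (Dmat K P n (rows3s x y z (m-1) (l-1) (y (l-1))) v)
          ∈ nonZeroDivisors (ZnRing K P n)) : QnRing K P n :=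
  EQuot K P n (rows3s x y z (m+1) (l-1) (y (l-1))) (rows3s x y z (m+1) (l-1) (z (p-1))) v h1
    * EQuot K P n (rows3s x y z (m-1) (l+1) (z (p-1))) (rows3s x y z (m-1) (l+1) (x (m-1))) v h2
    * EQuot K P n (rows3s x y z (m-1) (l-1) (x (m-1))) (rows3s x y z (m-1) (l-1) (y (l-1))) v h3

/-!
On a circle cut at a point `o`, the linking number is the cyclic sum
`J(rx, sy) = ε(r, y) + ε(y, x) + ε(x, s) + ε(s, r)`, where `ε` is half the sign of the difference of
two positions. Expanding the bracket of `Δ(a, v)` and `Δ(b, v)` with adjugate matrices, the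
`ε(v_k, v_m)` cancel, the signs between `v` and a single row tuple give terms that cancel in
determinant quotients, and only the signs between rows `b_j` and `a_i` remain.

If `a` and `b` consist of initial points of the three blocks `x`, `y`, `z`, rows common to `a` and
`b` do not contribute; after possibly exchanging `a` and `b`, the other rows of `a` lie in a single
block, so that the remaining sum is a rational multiple of `Δ(a, v) Δ(b, v)`. The multiple is a
piecewise linear function `h(d, e) / 2` of the differences `d`, `e` of the numbers of rows in the
blocks `x` and `z`.

The six determinants of `Θ(m, l, p)` sit, with alternating signs, at the vertices of a hexagon
around `(m, p)`. The alternating hexagon sum of `h` is supported at the centre, so the logarithmic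
bracket of `Θ(m, l, p)` with a determinant quotient only detects whether its numerator or its
denominator sits at `(m, p)`. Applied to the three factors of `Θ(m', l', p')`, this gives `±1` for
neighbouring points of the triangular lattice and `0` otherwise.
-/

section Determinants

variable {R A : Type*} [CommRing R] [CommRing A] [Algebra R A]
  {ι : Type*} [DecidableEq ι]

lemma derivation_prod (D : Derivation R A A) (s : Finset ι) (f : ι → A) :
    D (∏ i ∈ s, f i) = ∑ i ∈ s, (∏ j ∈ s.erase i, f j) * D (f i) := by
  induction s using Finset.induction_on with
  | empty => simp
  | insert a s ha ih =>
    have erase_prod : ∀ i ∈ s, ∏ j ∈ (insert a s).erase i, f j = f a * ∏ j ∈ s.erase i, f j := by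
      intro i hi
      rw [Finset.erase_insert_of_ne (ne_of_mem_of_not_mem hi ha).symm,
        Finset.prod_insert (by simp [ha])]
    rw [Finset.prod_insert ha, D.leibniz, ih, Finset.sum_insert ha, Finset.erase_insert ha,
      smul_eq_mul, smul_eq_mul, Finset.mul_sum, add_comm]
    congr 1
    exact Finset.sum_congr rfl fun i hi => by rw [erase_prod i hi, mul_assoc]

variable [Fintype ι]

lemma derivation_det (D : Derivation R A A) (M : Matrix ι ι A) :
    D M.det = ∑ k, ∑ i, M.adjugate k i * D (M i k) := by
  have cramer (k : ι) : ∑ i, M.adjugate k i * D (M i k) =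
      (M.updateCol k fun i => D (M i k)).det := by
    rw [← Matrix.cramer_apply, Matrix.cramer_eq_adjugate_mulVec]
    rfl
  simp_rw [cramer, Matrix.det_apply, map_sum]
  rw [Finset.sum_comm]
  refine Finset.sum_congr rfl fun σ _ => ?_
  rw [Units.smul_def, map_zsmul, derivation_prod, Finset.smul_sum]
  refine Finset.sum_congr rfl fun k _ => ?_
  rw [Units.smul_def, ← Finset.prod_erase_mul _ _ (Finset.mem_univ k), Matrix.updateCol_self]
  congr 2
  exact Finset.prod_congr rfl fun j hj => by rw [Matrix.updateCol_ne (Finset.ne_of_mem_erase hj)]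

lemma sum_adjugate_mul_apply (M : Matrix ι ι A) (k m : ι) :
    ∑ i, M.adjugate k i * M i m = if k = m then M.det else 0 := by
  rw [← Matrix.mul_apply, Matrix.adjugate_mul, Matrix.smul_apply, Matrix.one_apply, smul_eq_mul,
    mul_ite, mul_one, mul_zero]

lemma mul_adjugate_apply_of_row_eq {M N : Matrix ι ι A} {i₀ j : ι} (h : N j = M i₀) (i : ι) :
    (N * M.adjugate) j i = if i₀ = i then M.det else 0 := by
  rw [Matrix.mul_apply, h, ← Matrix.mul_apply, Matrix.mul_adjugate, Matrix.smul_apply,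
    Matrix.one_apply, smul_eq_mul, mul_ite, mul_one, mul_zero]

lemma sum_mul_adjugate_mul_mul_adjugate (M N : Matrix ι ι A) (j : ι) :
    ∑ i, (N * M.adjugate) j i * (M * N.adjugate) i j = M.det * N.det := by
  rw [← Matrix.mul_apply, Matrix.mul_assoc, ← Matrix.mul_assoc M.adjugate, Matrix.adjugate_mul,
    Matrix.smul_mul, Matrix.one_mul, Matrix.mul_smul, Matrix.mul_adjugate]
  simp

lemma sum_adjugate_mul_mul_adjugate (M N : Matrix ι ι A) (k j : ι) :
    ∑ i, M.adjugate k i * (M * N.adjugate) i j = M.det * N.adjugate k j := by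
  rw [← Matrix.mul_apply, ← Matrix.mul_assoc, Matrix.adjugate_mul]
  simp

lemma derivation_det_of_swap (D : Derivation R A A) (N : Matrix ι ι A) (u c e : ι → A) (k : ι)
    (h : ∀ j m, D (N j m) = (c m + e j) * (u m * N j k)) :
    D N.det = c k * u k * N.det + ∑ j, e j * (Matrix.vecMul u N.adjugate j * N j k) := by
  have column_part : ∑ m, ∑ j, c m * u m * (N.adjugate m j * N j k) = c k * u k * N.det := by
    simp [← Finset.mul_sum, sum_adjugate_mul_apply]
  have row_part : ∑ m, ∑ j, e j * (u m * N.adjugate m j * N j k) =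
      ∑ j, e j * (Matrix.vecMul u N.adjugate j * N j k) := by
    rw [Finset.sum_comm]
    simp only [Matrix.vecMul, dotProduct, ← Finset.mul_sum, Finset.sum_mul]
  rw [derivation_det, ← column_part, ← row_part]
  simp only [h, ← Finset.sum_add_distrib]
  exact Finset.sum_congr rfl fun m _ => Finset.sum_congr rfl fun j _ => by ring

lemma derivation_det_of_double_swap (D : Derivation R A A) (M N : Matrix ι ι A)
    (p r s : ι → ι → A)
    (h : ∀ i k, D (M i k) = p i k * M i k * N.det +
      ∑ j, (r k j + s j i) * ((M * N.adjugate) i j * N j k)) :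
    D M.det = ∑ j, ∑ i, s j i * ((N * M.adjugate) j i * (M * N.adjugate) i j) +
      (∑ i, ∑ k, p i k * (M i k * M.adjugate k i)) * N.det +
      M.det * ∑ j, ∑ k, r k j * (N j k * N.adjugate k j) := by
  have entry_part : ∑ k, ∑ i, M.adjugate k i * (p i k * M i k * N.det) =
      (∑ i, ∑ k, p i k * (M i k * M.adjugate k i)) * N.det := by
    rw [Finset.sum_comm]
    simp only [Finset.sum_mul]
    exact Finset.sum_congr rfl fun i _ => Finset.sum_congr rfl fun k _ => by ring
  have column_part : ∑ k, ∑ i, ∑ j, M.adjugate k i * (r k j * ((M * N.adjugate) i j * N j k)) =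
      M.det * ∑ j, ∑ k, r k j * (N j k * N.adjugate k j) := by
    calc _ = ∑ k, ∑ j, r k j * N j k * ∑ i, M.adjugate k i * (M * N.adjugate) i j := by
          refine Finset.sum_congr rfl fun k _ => ?_
          rw [Finset.sum_comm]
          simp only [Finset.mul_sum]
          exact Finset.sum_congr rfl fun j _ => Finset.sum_congr rfl fun i _ => by ring
      _ = _ := by
          rw [Finset.sum_comm]
          simp only [sum_adjugate_mul_mul_adjugate, Finset.mul_sum]
          exact Finset.sum_congr rfl fun j _ => Finset.sum_congr rfl fun k _ => by ring
  have row_part : ∑ k, ∑ i, ∑ j, M.adjugate k i * (s j i * ((M * N.adjugate) i j * N j k)) =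
      ∑ j, ∑ i, s j i * ((N * M.adjugate) j i * (M * N.adjugate) i j) := by
    rw [Finset.sum_comm_cycle]
    refine Finset.sum_congr rfl fun j _ => ?_
    rw [Finset.sum_comm]
    refine Finset.sum_congr rfl fun i _ => ?_
    rw [Matrix.mul_apply (M := N), Finset.sum_mul, Finset.mul_sum]
    exact Finset.sum_congr rfl fun k _ => by ring
  rw [derivation_det, ← entry_part, ← column_part, ← row_part]
  simp only [h, Finset.mul_sum, mul_add, add_mul, Finset.sum_add_distrib]
  ring

end Determinants

section LinkingNumbers

lemma coe_coordAt (o x : Circle1) : (coordAt o x : Circle1) = x - o :=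
  AddCircle.coe_equivIco (p := (1 : ℝ)) (a := 0)

lemma coordAt_nonneg (o x : Circle1) : 0 ≤ coordAt o x :=
  (AddCircle.equivIco (1 : ℝ) 0 (x - o)).2.1

lemma coordAt_lt_one (o x : Circle1) : coordAt o x < 1 := by
  simpa [coordAt] using (AddCircle.equivIco (1 : ℝ) 0 (x - o)).2.2

lemma coordAt_eq_add_or_eq_add_sub_one (o o' x : Circle1) :
    coordAt o' x = coordAt o x + coordAt o' o ∨ coordAt o' x = coordAt o x + coordAt o' o - 1 := by
  have coe_eq_zero : ((coordAt o' x - coordAt o x - coordAt o' o : ℝ) : Circle1) = 0 := by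
    rw [AddCircle.coe_sub, AddCircle.coe_sub, coe_coordAt, coe_coordAt, coe_coordAt]
    abel
  obtain ⟨k, hk⟩ := (AddCircle.coe_eq_zero_iff _).1 coe_eq_zero
  rw [zsmul_eq_mul, mul_one] at hk
  have x_nonneg := coordAt_nonneg o x
  have x_lt := coordAt_lt_one o x
  have x_nonneg' := coordAt_nonneg o' x
  have x_lt' := coordAt_lt_one o' x
  have o_nonneg := coordAt_nonneg o' o
  have o_lt := coordAt_lt_one o' o
  have k_lt : (k : ℝ) < (1 : ℤ) := by push_cast; linarith
  have lt_k : ((-2 : ℤ) : ℝ) < k := by push_cast; linarith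
  obtain rfl | rfl : k = 0 ∨ k = -1 := by
    have := Int.cast_lt.1 k_lt
    have := Int.cast_lt.1 lt_k
    omega
  · left
    push_cast at hk
    linarith
  · right
    push_cast at hk
    linarith

/-- Half the sign of the difference of the positions of `a` and `b` on the circle cut at `o`. -/
def halfSign (o a b : Circle1) : ℚ := 1 / 2 * sgnQ (coordAt o a - coordAt o b)

lemma halfSign_of_lt {o a b : Circle1} (h : coordAt o a < coordAt o b) :
    halfSign o a b = -(1 / 2) := by
  rw [halfSign, sgnQ, if_pos (sub_neg.2 h)]
  norm_num

lemma halfSign_of_gt {o a b : Circle1} (h : coordAt o b < coordAt o a) :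
    halfSign o a b = 1 / 2 := by
  rw [halfSign, sgnQ, if_neg (sub_pos.2 h).not_gt, if_neg (sub_pos.2 h).ne']
  norm_num

lemma halfSign_of_eq {o a b : Circle1} (h : coordAt o a = coordAt o b) : halfSign o a b = 0 := by
  simp [halfSign, sgnQ, h]

lemma halfSign_self (o a : Circle1) : halfSign o a a = 0 := halfSign_of_eq rfl

lemma neg_halfSign (o a b : Circle1) : -halfSign o a b = halfSign o b a := by
  rcases lt_trichotomy (coordAt o a) (coordAt o b) with h | h | h
  · rw [halfSign_of_lt h, halfSign_of_gt h, neg_neg]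
  · rw [halfSign_of_eq h, halfSign_of_eq h.symm, neg_zero]
  · rw [halfSign_of_gt h, halfSign_of_lt h]

lemma exists_halfSign_eq_add_sub (o o' : Circle1) :
    ∃ w : Circle1 → ℚ, ∀ a b, halfSign o' a b = halfSign o a b + (w a - w b) := by
  refine ⟨fun a => if coordAt o' a = coordAt o a + coordAt o' o then 0 else -1, fun a b => ?_⟩
  beta_reduce
  have a_nonneg := coordAt_nonneg o a
  have a_lt := coordAt_lt_one o a
  have b_nonneg := coordAt_nonneg o b
  have b_lt := coordAt_lt_one o b
  have a_nonneg' := coordAt_nonneg o' a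
  have a_lt' := coordAt_lt_one o' a
  have b_nonneg' := coordAt_nonneg o' b
  have b_lt' := coordAt_lt_one o' b
  rcases coordAt_eq_add_or_eq_add_sub_one o o' a with ha | ha <;>
    rcases coordAt_eq_add_or_eq_add_sub_one o o' b with hb | hb
  · simp [halfSign, ha, hb]
  · rw [if_pos ha, if_neg (by linarith), halfSign_of_gt (by linarith), halfSign_of_lt (by linarith)]
    norm_num
  · rw [if_neg (by linarith), if_pos hb, halfSign_of_lt (by linarith), halfSign_of_gt (by linarith)]
    norm_num
  · rw [if_neg (by linarith), if_neg (by linarith)]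
    simp [halfSign, ha, hb]

lemma sgnQ_mul_sgnQ_mul_sgnQ (o r x y : Circle1) :
    1 / 2 * (sgnQ (coordAt o r - coordAt o x) * sgnQ (coordAt o r - coordAt o y) *
      sgnQ (coordAt o y - coordAt o x)) = halfSign o r y + halfSign o y x + halfSign o x r := by
  unfold halfSign
  generalize coordAt o r = r, coordAt o x = x, coordAt o y = y
  grind [sgnQ]

lemma linkQ_eq_sum_halfSign (o r x s y : Circle1) :
    linkQ r x s y = halfSign o r y + halfSign o y x + halfSign o x s + halfSign o s r := by
  rw [linkQ]
  generalize (exists_cut r x s y).choose = o'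
  obtain ⟨w, hw⟩ := exists_halfSign_eq_add_sub o o'
  rw [linkingAt, mul_sub, sgnQ_mul_sgnQ_mul_sgnQ, sgnQ_mul_sgnQ_mul_sgnQ]
  simp only [hw, ← neg_halfSign o r s, ← neg_halfSign o s x]
  ring

end LinkingNumbers

section SwappingBracket

variable {K : Type} [Field K] {P : Set Circle1} {n : ℕ}

lemma gen_self (x : P) : gen K P x x = 0 := by simp [gen]

lemma gen_of_ne {x y : P} (h : x ≠ y) : gen K P x y = X (⟨(x, y), h⟩ : SwapIdx P) := by
  simp [gen, h]

lemma exists_derivation_eq_swapBr_gen (c₁ c₂ : K) (r x : P) :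
    ∃ D : Derivation K (SwapRing K P) (SwapRing K P),
      ∀ f, D f = swapBr K P c₁ c₂ (gen K P r x) f := by
  rcases eq_or_ne r x with rfl | h
  · exact ⟨0, fun f => by rw [gen_self, swapBr, map_zero, Derivation.zero_apply]⟩
  · exact ⟨mkDerivation K (genBr K P c₁ c₂ ⟨(r, x), h⟩), fun f => by
      rw [gen_of_ne h, swapBr, mkDerivation_X]⟩

variable (K) in
/-- The matrix `(a_i v_j)` of generators, whose determinant is `Δ(a, v)`. -/
def genMatrix (v a : Fin n → P) : Matrix (Fin n) (Fin n) (SwapRing K P) :=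
  Matrix.of fun i j => gen K P (a i) (v j)

lemma det_genMatrix (v a : Fin n → P) : (genMatrix K v a).det = Dmat K P n a v := rfl

lemma mul_adjugate_genMatrix_apply_of_eq {v a b : Fin n → P} {i₀ j : Fin n} (h : a i₀ = b j)
    (i : Fin n) : (genMatrix K v b * (genMatrix K v a).adjugate) j i =
      if i₀ = i then (genMatrix K v a).det else 0 :=
  mul_adjugate_apply_of_row_eq (by ext m; simp [genMatrix, h]) i

variable [CharZero K]

variable (K) in
/-- `halfSign` as a scalar of the swapping ring. -/
def signScalar (o : Circle1) (a b : P) : SwapRing K P := algebraMap ℚ _ (halfSign o a b)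

lemma neg_signScalar (o : Circle1) (a b : P) : -signScalar K o a b = signScalar K o b a := by
  rw [signScalar, ← map_neg, neg_halfSign, signScalar]

lemma signScalar_self (o : Circle1) (a : P) : signScalar K o a a = 0 := by
  rw [signScalar, halfSign_self, map_zero]

lemma swapBr_gen_gen (o : Circle1) (r x s y : P) :
    swapBr K P 1 0 (gen K P r x) (gen K P s y) =
      (signScalar K o r y + signScalar K o y x + signScalar K o x s + signScalar K o s r) *
        (gen K P r y * gen K P s x) := by
  rcases eq_or_ne r x with rfl | hrx
  · rw [gen_self, swapBr, map_zero, ← neg_signScalar o r y, ← neg_signScalar o r s]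
    ring
  rcases eq_or_ne s y with rfl | hsy
  · obtain ⟨D, hD⟩ := exists_derivation_eq_swapBr_gen (1 : K) 0 r x
    rw [gen_self, ← hD, map_zero, ← neg_signScalar o r s, ← neg_signScalar o s x]
    ring
  · rw [gen_of_ne hrx, gen_of_ne hsy, swapBr, mkDerivation_X, mkDerivation_X, genBr,
      Rat.cast_smul_eq_qsmul, Algebra.smul_def, linkQ_eq_sum_halfSign o]
    simp only [one_smul, zero_smul, add_zero, map_add, signScalar]

lemma swapBr_gen_det (o : Circle1) (v a b : Fin n → P) (i k : Fin n) :
    swapBr K P 1 0 (genMatrix K v a i k) (genMatrix K v b).det =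
      signScalar K o (a i) (v k) * genMatrix K v a i k * (genMatrix K v b).det +
        ∑ j, (signScalar K o (v k) (b j) + signScalar K o (b j) (a i)) *
          ((genMatrix K v a * (genMatrix K v b).adjugate) i j * genMatrix K v b j k) := by
  obtain ⟨D, hD⟩ := exists_derivation_eq_swapBr_gen (1 : K) 0 (a i) (v k)
  have entry (j m : Fin n) : D (genMatrix K v b j m) =
      (signScalar K o (a i) (v m) + signScalar K o (v m) (v k) +
        (signScalar K o (v k) (b j) + signScalar K o (b j) (a i))) *
      (genMatrix K v a i m * genMatrix K v b j k) := by
    simp only [hD, genMatrix, Matrix.of_apply, swapBr_gen_gen o]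
    ring
  have bracket_det := derivation_det_of_swap D _ _ _ _ k entry
  rw [signScalar_self, add_zero] at bracket_det
  simp only [Matrix.mul_apply_eq_vecMul]
  rw [← bracket_det, hD]
  rfl

variable (K) in
/-- The part of the swapping bracket of `Δ(a, v)` and `Δ(b, v)` that depends on the mutual
position of the rows `a` and `b`: the signs of the pairs `(b_j, a_i)`, weighted by the products of
the determinants in which `a_i` and `b_j` have been exchanged. -/
def crossTerm (o : Circle1) (v a b : Fin n → P) : SwapRing K P :=
  ∑ j, ∑ i, signScalar K o (b j) (a i) *
    ((genMatrix K v b * (genMatrix K v a).adjugate) j i *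
      (genMatrix K v a * (genMatrix K v b).adjugate) i j)

variable (K) in
/-- The part of a swapping bracket with `Δ(a, v)` that depends on the position of `a` and `v` only;
it cancels in quotients of determinants with the same `v`. -/
def sideTerm (o : Circle1) (v a : Fin n → P) : SwapRing K P :=
  ∑ i, ∑ k, signScalar K o (a i) (v k) * (genMatrix K v a i k * (genMatrix K v a).adjugate k i)

lemma swapBr_Dmat (o : Circle1) (v a b : Fin n → P) :
    swapBr K P 1 0 (Dmat K P n a v) (Dmat K P n b v) =
      crossTerm K o v a b + sideTerm K o v a * Dmat K P n b v -
        Dmat K P n a v * sideTerm K o v b := by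
  have neg_sideTerm : ∑ j, ∑ k, signScalar K o (v k) (b j) *
      (genMatrix K v b j k * (genMatrix K v b).adjugate k j) = -sideTerm K o v b := by
    simp only [sideTerm, ← neg_signScalar o _ (v _), neg_mul, Finset.sum_neg_distrib]
  simp only [← det_genMatrix]
  rw [sub_eq_add_neg, ← mul_neg, ← neg_sideTerm]
  exact derivation_det_of_double_swap _ _ _ (fun i k => signScalar K o (a i) (v k))
    (fun k j => signScalar K o (v k) (b j)) (fun j i => signScalar K o (b j) (a i))
    (swapBr_gen_det o v a b)

lemma neg_crossTerm (o : Circle1) (v a b : Fin n → P) :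
    -crossTerm K o v a b = crossTerm K o v b a := by
  rw [crossTerm, Finset.sum_comm, ← Finset.sum_neg_distrib]
  simp only [← Finset.sum_neg_distrib, ← neg_mul, neg_signScalar]
  exact Finset.sum_congr rfl fun i _ => Finset.sum_congr rfl fun j _ => by ring

lemma crossTerm_eq_of_halfSign_eq (o : Circle1) (v : Fin n → P) {a b : Fin n → P} (s : P → ℚ)
    (hs : ∀ i j, a i ∉ Set.range b → b j ∉ Set.range a → halfSign o (b j) (a i) = s (b j)) :
    crossTerm K o v a b = algebraMap ℚ _ (∑ j, if b j ∈ Set.range a then 0 else s (b j)) *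
      (Dmat K P n a v * Dmat K P n b v) := by
  rw [crossTerm, map_sum, Finset.sum_mul]
  refine Finset.sum_congr rfl fun j _ => ?_
  split_ifs with hj
  · obtain ⟨i₀, hi₀⟩ := hj
    rw [map_zero, zero_mul]
    refine Finset.sum_eq_zero fun i _ => ?_
    rcases eq_or_ne i₀ i with rfl | hi
    · rw [hi₀, signScalar_self, zero_mul]
    · rw [mul_adjugate_genMatrix_apply_of_eq hi₀, if_neg hi, zero_mul, mul_zero]
  · rw [← det_genMatrix, ← det_genMatrix, ← sum_mul_adjugate_mul_mul_adjugate _ _ j,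
      Finset.mul_sum]
    refine Finset.sum_congr rfl fun i _ => ?_
    by_cases hi : a i ∈ Set.range b
    · obtain ⟨j₀, hj₀⟩ := hi
      have hne : j₀ ≠ j := by
        rintro rfl
        exact hj ⟨i, hj₀.symm⟩
      rw [mul_adjugate_genMatrix_apply_of_eq hj₀, if_neg hne, mul_zero, mul_zero, mul_zero]
    · rw [signScalar, hs i j hi hj]

end SwappingBracket

section Blocks

variable {ι : Type*} {P : Set Circle1} {pts : ι → ℕ → P}

section BlockOrdered

variable [LinearOrder ι] {o : Circle1} {N : ℕ}

/-- The first `N` points of each family `pts c` are distinct, and on the circle cut at `o` the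
families occupy consecutive blocks in the order of their indices. -/
structure BlockOrdered (o : Circle1) (pts : ι → ℕ → P) (N : ℕ) : Prop where
  coordAt_lt : ∀ ⦃c d : ι⦄, c < d → ∀ ⦃r s : ℕ⦄, r < N → s < N →
    coordAt o (pts c r) < coordAt o (pts d s)
  injOn : ∀ c, Set.InjOn (pts c) (Set.Iio N)

/-- Half the sign of the mutual position of the blocks `c` and `d`. -/
def blockSign (c d : ι) : ℚ := if c < d then -(1 / 2) else if d < c then 1 / 2 else 0

namespace BlockOrdered

lemma halfSign_eq (h : BlockOrdered o pts N) {c d : ι} (hcd : c ≠ d) {r s : ℕ} (hr : r < N)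
    (hs : s < N) : halfSign o (pts c r) (pts d s) = blockSign c d := by
  rcases hcd.lt_or_gt with hlt | hgt
  · rw [halfSign_of_lt (h.coordAt_lt hlt hr hs), blockSign, if_pos hlt]
  · rw [halfSign_of_gt (h.coordAt_lt hgt hs hr), blockSign, if_neg hgt.not_gt, if_pos hgt]

lemma eq_and_eq_of_eq (h : BlockOrdered o pts N) {c d : ι} {r s : ℕ} (hr : r < N) (hs : s < N)
    (heq : pts c r = pts d s) : c = d ∧ r = s := by
  rcases lt_trichotomy c d with hlt | rfl | hgt
  · exact absurd (h.coordAt_lt hlt hr hs) (by simp [heq])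
  · exact ⟨rfl, h.injOn c hr hs heq⟩
  · exact absurd (h.coordAt_lt hgt hs hr) (by simp [heq])

end BlockOrdered

end BlockOrdered

variable [Fintype ι] {n : ℕ} {a b : Fin n → P} {k k' : ι → ℕ}

/-- Up to the order of the entries, the tuple `a` consists of the first `k c` points of each
family `pts c`. -/
def IsInitialRows (pts : ι → ℕ → P) (a : Fin n → P) (k : ι → ℕ) : Prop :=
  Finset.univ.val.map a = ∑ c, (Multiset.range (k c)).map (pts c)

namespace IsInitialRows

lemma mem_range (ha : IsInitialRows pts a k) {q : P} :
    q ∈ Set.range a ↔ ∃ c, ∃ r < k c, pts c r = q := by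
  simpa [Multiset.mem_sum] using congrArg (q ∈ ·) ha

lemma sum_apply {A : Type*} [AddCommMonoid A] (ha : IsInitialRows pts a k) (f : P → A) :
    ∑ j, f (a j) = ∑ c, ∑ r ∈ Finset.range (k c), f (pts c r) := by
  calc ∑ j, f (a j) = ((Finset.univ.val.map a).map f).sum := by rw [Multiset.map_map]; rfl
    _ = Multiset.sumAddMonoidHom.comp (Multiset.mapAddMonoidHom f)
        (∑ c, (Multiset.range (k c)).map (pts c)) := by rw [ha]; rfl
    _ = _ := by
      rw [map_sum]
      refine Finset.sum_congr rfl fun c _ => ?_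
      exact congrArg Multiset.sum (Multiset.map_map f (pts c) (Multiset.range (k c)))

lemma sum_eq (ha : IsInitialRows pts a k) : ∑ c, k c = n := by
  simpa using (ha.sum_apply fun _ => (1 : ℕ)).symm

end IsInitialRows

lemma le_of_sum_eq_of_forall_ne_le (hsum : ∑ c, k c = ∑ c, k' c) {c₀ : ι}
    (hle : ∀ c ≠ c₀, k c ≤ k' c) : k' c₀ ≤ k c₀ := by
  by_contra! hlt
  exact (Finset.sum_lt_sum (fun c _ => by
    rcases eq_or_ne c c₀ with rfl | hc
    · exact hlt.le
    · exact hle c hc) ⟨c₀, Finset.mem_univ _, hlt⟩).ne hsum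

variable [LinearOrder ι] {o : Circle1} {N : ℕ}

lemma IsInitialRows.apply_mem_range_iff (ha : IsInitialRows pts a k) (h : BlockOrdered o pts N)
    (hk : ∀ c, k c ≤ N) {c : ι} {r : ℕ} (hr : r < N) : pts c r ∈ Set.range a ↔ r < k c := by
  rw [ha.mem_range]
  refine ⟨?_, fun hrk => ⟨c, r, hrk, rfl⟩⟩
  rintro ⟨d, s, hs, heq⟩
  obtain ⟨rfl, rfl⟩ := h.eq_and_eq_of_eq (hs.trans_le (hk d)) hr heq
  exact hs

variable {K : Type} [Field K] [CharZero K]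

lemma sum_range_ite_lt {m m' : ℕ} (h : m ≤ m') (q : ℚ) :
    ∑ r ∈ Finset.range m', (if r < m then 0 else q) = q * ((m' : ℚ) - m) := by
  rw [← Finset.sum_range_add_sum_Ico _ h, Finset.sum_eq_zero fun r hr => if_pos (by simpa using hr),
    Finset.sum_congr rfl fun r hr => if_neg (by simp at hr; omega)]
  simp [Nat.cast_sub h, mul_comm]

lemma sum_halfSign_of_notMem_range (h : BlockOrdered o pts N) (ha : IsInitialRows pts a k)
    (hb : IsInitialRows pts b k') (hk : ∀ c, k c ≤ N) (hk' : ∀ c, k' c ≤ N) {c₀ : ι}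
    (hle : ∀ c ≠ c₀, k c ≤ k' c) (hge : k' c₀ ≤ k c₀) :
    ∑ j, (if b j ∈ Set.range a then 0 else halfSign o (b j) (pts c₀ 0)) =
      ∑ c, blockSign c c₀ * ((k' c : ℚ) - k c) := by
  rw [hb.sum_apply fun q => if q ∈ Set.range a then 0 else halfSign o q (pts c₀ 0)]
  refine Finset.sum_congr rfl fun c _ => ?_
  have term (r : ℕ) (hr : r ∈ Finset.range (k' c)) :
      (if pts c r ∈ Set.range a then 0 else halfSign o (pts c r) (pts c₀ 0)) =
        if r < k c then 0 else blockSign c c₀ := by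
    have hrk' := Finset.mem_range.1 hr
    have hrN := hrk'.trans_le (hk' c)
    simp only [ha.apply_mem_range_iff h hk hrN]
    rcases eq_or_ne c c₀ with rfl | hc
    · rw [if_pos (hrk'.trans_le hge), if_pos (hrk'.trans_le hge)]
    · rw [h.halfSign_eq hc hrN (by omega)]
  rw [Finset.sum_congr rfl term]
  rcases eq_or_ne c c₀ with rfl | hc
  · simp [blockSign]
  · exact sum_range_ite_lt (hle c hc) _

lemma crossTerm_of_initialRows (h : BlockOrdered o pts N) (v : Fin n → P)
    (ha : IsInitialRows pts a k) (hb : IsInitialRows pts b k') (hk : ∀ c, k c ≤ N)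
    (hk' : ∀ c, k' c ≤ N) {c₀ : ι} (hle : ∀ c ≠ c₀, k c ≤ k' c) :
    crossTerm K o v a b = algebraMap ℚ _ (∑ c, blockSign c c₀ * ((k' c : ℚ) - k c)) *
      (Dmat K P n a v * Dmat K P n b v) := by
  have hge : k' c₀ ≤ k c₀ := le_of_sum_eq_of_forall_ne_le (ha.sum_eq.trans hb.sum_eq.symm) hle
  have sign_eq (i j : Fin n) (hi : a i ∉ Set.range b) (hj : b j ∉ Set.range a) :
      halfSign o (b j) (a i) = halfSign o (b j) (pts c₀ 0) := by
    obtain ⟨c, r, hr, hcr⟩ := ha.mem_range.1 ⟨i, rfl⟩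
    obtain ⟨d, s, hs, hds⟩ := hb.mem_range.1 ⟨j, rfl⟩
    have hrN := hr.trans_le (hk c)
    have hsN := hs.trans_le (hk' d)
    rw [← hcr, hb.apply_mem_range_iff h hk' hrN] at hi
    rw [← hds, ha.apply_mem_range_iff h hk hsN] at hj
    obtain rfl : c = c₀ := by
      by_contra hc
      exact hi (hr.trans_le (hle c hc))
    have hdc : d ≠ c := by
      rintro rfl
      omega
    rw [← hcr, ← hds, h.halfSign_eq hdc hsN hrN, h.halfSign_eq hdc hsN (by omega)]
  rw [crossTerm_eq_of_halfSign_eq o v (fun q => halfSign o q (pts c₀ 0)) sign_eq,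
    sum_halfSign_of_notMem_range h ha hb hk hk' hle hge]

end Blocks

section Hexagon

/-- The median of `-d`, `e` and `e - d`. For two tuples of initial rows of three blocks whose row
counts differ by `d` in the first block and by `e` in the third one, this is twice the coefficient
of their cross term. -/
def hexWeight (d e : ℤ) : ℤ := max (min (-d) e) (min (max (-d) e) (e - d))

lemma hexWeight_neg (d e : ℤ) : hexWeight (-d) (-e) = -hexWeight d e := by
  unfold hexWeight
  omega

lemma hexWeight_eq_ite (d e : ℤ) :
    hexWeight d e =
      if 0 ≤ d ∧ 0 ≤ e ∨ d ≤ 0 ∧ e ≤ 0 then e - d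
      else if 0 ≤ e ∧ d + e ≤ 0 ∨ e ≤ 0 ∧ 0 ≤ d + e then -d else e := by
  grind [hexWeight]

-- The lines `d = 0`, `e = 0`, `d + e = 0` on which `hexWeight` fails to be linear meet only at the
-- origin, so the alternating sum around a hexagon vanishes unless its centre is the origin.
lemma hexWeight_alternating_sum (m p u w : ℤ) :
    hexWeight (u - (m + 1)) (w - (p - 1)) - hexWeight (u - (m + 1)) (w - p) +
      (hexWeight (u - (m - 1)) (w - p) - hexWeight (u - m) (w - (p - 1))) +
      (hexWeight (u - m) (w - (p + 1)) - hexWeight (u - (m - 1)) (w - (p + 1))) =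
        if u = m ∧ w = p then -2 else 0 := by
  simp only [hexWeight_eq_ite]
  grind

/-- The signed adjacency of points of the triangular lattice, that is, the exchange matrix of the
Fock–Goncharov quiver of a triangle: `(d, e)` is the displacement in the first and third
coordinates. -/
def hexSign (d e : ℤ) : ℤ :=
  if d = 1 ∧ e = -1 ∨ d = -1 ∧ e = 0 ∨ d = 0 ∧ e = 1 then 1
  else if d = -1 ∧ e = 1 ∨ d = 1 ∧ e = 0 ∨ d = 0 ∧ e = -1 then -1
  else 0

lemma hexSign_sub_sub (m p m' p' : ℤ) :
    hexSign (m' - m) (p' - p) =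
      ((if m' + 1 = m ∧ p' = p then 1 else 0) - if m' + 1 = m ∧ p' - 1 = p then 1 else 0) +
      ((if m' = m ∧ p' - 1 = p then 1 else 0) - if m' - 1 = m ∧ p' = p then 1 else 0) +
      ((if m' - 1 = m ∧ p' + 1 = p then 1 else 0) - if m' = m ∧ p' + 1 = p then 1 else 0) := by
  grind [hexSign]

end Hexagon

section ThreeBlocks

variable {P : Set Circle1} {n N : ℕ} {a b : Fin n → P} {k k' : Fin 3 → ℕ}

lemma sum_blockSign_fin_three {f : Fin 3 → ℤ} (hsum : f 0 + f 1 + f 2 = 0) {c₀ : Fin 3}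
    (hf : ∀ c ≠ c₀, 0 ≤ f c) :
    ∑ c, blockSign c c₀ * (f c : ℚ) = 1 / 2 * hexWeight (f 0) (f 2) := by
  obtain rfl | rfl | rfl : c₀ = 0 ∨ c₀ = 1 ∨ c₀ = 2 := by fin_cases c₀ <;> simp
  · have weight : hexWeight (f 0) (f 2) = f 1 + f 2 := by
      grind [hexWeight, hf 1 (by decide), hf 2 (by decide)]
    simp [Fin.sum_univ_three, blockSign, weight, mul_add]
  · have weight : hexWeight (f 0) (f 2) = -f 0 + f 2 := by
      grind [hexWeight, hf 0 (by decide), hf 2 (by decide)]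
    simp [Fin.sum_univ_three, blockSign, weight, mul_add]
  · have weight : hexWeight (f 0) (f 2) = -f 0 - f 1 := by
      grind [hexWeight, hf 0 (by decide), hf 1 (by decide)]
    simp [Fin.sum_univ_three, blockSign, weight]
    ring

variable {K : Type} [Field K] [CharZero K] {o : Circle1} {pts : Fin 3 → ℕ → P}

lemma crossTerm_fin_three_of_forall_ne_le (h : BlockOrdered o pts N) (v : Fin n → P)
    (ha : IsInitialRows pts a k) (hb : IsInitialRows pts b k') (hk : ∀ c, k c ≤ N)
    (hk' : ∀ c, k' c ≤ N) {c₀ : Fin 3} (hle : ∀ c ≠ c₀, k c ≤ k' c) :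
    crossTerm K o v a b =
      algebraMap ℚ _ (1 / 2 * hexWeight ((k' 0 : ℤ) - k 0) ((k' 2 : ℤ) - k 2)) *
        (Dmat K P n a v * Dmat K P n b v) := by
  have hsum := ha.sum_eq.trans hb.sum_eq.symm
  rw [Fin.sum_univ_three, Fin.sum_univ_three] at hsum
  rw [crossTerm_of_initialRows h v ha hb hk hk' hle,
    ← sum_blockSign_fin_three (f := fun c => (k' c : ℤ) - k c) (by omega)
      fun c hc => sub_nonneg.2 (Nat.cast_le.2 (hle c hc))]
  push_cast
  rfl

lemma crossTerm_fin_three (h : BlockOrdered o pts N) (v : Fin n → P)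
    (ha : IsInitialRows pts a k) (hb : IsInitialRows pts b k') (hk : ∀ c, k c ≤ N)
    (hk' : ∀ c, k' c ≤ N) :
    crossTerm K o v a b =
      algebraMap ℚ _ (1 / 2 * hexWeight ((k' 0 : ℤ) - k 0) ((k' 2 : ℤ) - k 2)) *
        (Dmat K P n a v * Dmat K P n b v) := by
  have hsum : ∑ c, k c = ∑ c, k' c := ha.sum_eq.trans hb.sum_eq.symm
  rw [Fin.sum_univ_three, Fin.sum_univ_three] at hsum
  obtain ⟨c₀, hle | hle⟩ : ∃ c₀, (∀ c ≠ c₀, k c ≤ k' c) ∨ ∀ c ≠ c₀, k' c ≤ k c := by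
    have two_same_sign : (k 1 ≤ k' 1 ∧ k 2 ≤ k' 2 ∨ k' 1 ≤ k 1 ∧ k' 2 ≤ k 2) ∨
        (k 0 ≤ k' 0 ∧ k 2 ≤ k' 2 ∨ k' 0 ≤ k 0 ∧ k' 2 ≤ k 2) ∨
        (k 0 ≤ k' 0 ∧ k 1 ≤ k' 1 ∨ k' 0 ≤ k 0 ∧ k' 1 ≤ k 1) := by omega
    simpa [Fin.exists_fin_succ, Fin.forall_fin_succ] using two_same_sign
  · exact crossTerm_fin_three_of_forall_ne_le h v ha hb hk hk' hle
  · rw [← neg_crossTerm, crossTerm_fin_three_of_forall_ne_le h v hb ha hk' hk hle,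
      ← neg_sub (k' 0 : ℤ), ← neg_sub (k' 2 : ℤ), hexWeight_neg, ← neg_mul, ← map_neg]
    push_cast
    ring_nf

lemma ofFn_rows3s {α : Type*} (x y z : ℕ → α) (w : α) {i j k : ℕ} (h : i + j + k + 1 = n) :
    List.ofFn (rows3s x y z i j w : Fin n → α) =
      (List.range i).map x ++ (List.range j).map y ++ (List.range k).map z ++ [w] := by
  refine List.ext_getElem (by simp; omega) fun r _ _ => ?_
  grind [rows3s]

lemma isInitialRows_rows3s (x y z : ℕ → P) (c : Fin 3) (h : k 0 + k 1 + k 2 + 1 = n) :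
    IsInitialRows ![x, y, z] (rows3s x y z (k 0) (k 1) (![x, y, z] c (k c)) : Fin n → P)
      (k + Pi.single c 1) := by
  rw [IsInitialRows, Fin.univ_val_map, ofFn_rows3s x y z _ h, Fin.sum_univ_three]
  simp only [← Multiset.coe_add, ← Multiset.map_coe, Multiset.coe_range, Multiset.coe_singleton]
  rw [add_comm _ {_}, Multiset.singleton_add]
  fin_cases c <;> simp [Multiset.range_succ]

lemma mem_descPts {f : ℕ → Circle1} {r : ℕ} (h : r < N) : f r ∈ descPts f N := by
  simpa [descPts] using ⟨r, h, rfl⟩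

lemma injOn_of_pairwise_descPts {o : Circle1} {x : ℕ → P}
    (h : (descPts (fun i => (x i : Circle1)) N).Pairwise fun p q => coordAt o p < coordAt o q) :
    Set.InjOn x (Set.Iio N) := by
  have nodup : (descPts (fun i => (x i : Circle1)) N).Nodup :=
    h.imp fun hlt heq => hlt.ne (congrArg _ heq)
  intro i hi j hj hij
  exact List.inj_on_of_nodup_map (List.nodup_reverse.1 nodup) (List.mem_range.2 hi)
    (List.mem_range.2 hj) (congrArg Subtype.val hij)

lemma exists_blockOrdered_of_anticlockwiseList {x y z : ℕ → P}
    (h : AnticlockwiseList (descPts (fun i => (x i : Circle1)) N ++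
      descPts (fun i => (y i : Circle1)) N ++ descPts (fun i => (z i : Circle1)) N)) :
    ∃ o, BlockOrdered o ![x, y, z] N := by
  obtain ⟨o, -, hchain⟩ := h
  have pairwise := List.isChain_iff_pairwise.1 hchain
  simp only [List.pairwise_map, List.pairwise_append, List.mem_append] at pairwise
  obtain ⟨⟨hx, hy, hxy⟩, hz, hxyz⟩ := pairwise
  refine ⟨o, ⟨fun c d hcd r s hr hs => ?_, fun c => ?_⟩⟩
  · fin_cases c <;> fin_cases d <;> first
      | exact absurd hcd (by decide)
      | exact hxy _ (mem_descPts hr) _ (mem_descPts hs)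
      | exact hxyz _ (Or.inl (mem_descPts hr)) _ (mem_descPts hs)
      | exact hxyz _ (Or.inr (mem_descPts hr)) _ (mem_descPts hs)
  · fin_cases c
    exacts [injOn_of_pairwise_descPts hx, injOn_of_pairwise_descPts hy,
      injOn_of_pairwise_descPts hz]

end ThreeBlocks

section LogBrackets

/-- A binary operation on a commutative ring satisfying the Leibniz rule in both arguments. -/
structure IsLeibnizBracket {A : Type*} [CommRing A] (B : A → A → A) : Prop where
  mul_left : ∀ f g h, B (f * g) h = f * B g h + g * B f h
  mul_right : ∀ f g h, B f (g * h) = g * B f h + h * B f g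

/-- The normalized bracket `[f, g] = B f g / (f * g)` is the rational constant `c`, written without
division because `f` and `g` may be zero divisors. -/
def HasLogBracket {A : Type*} [CommRing A] [Algebra ℚ A] (B : A → A → A) (c : ℚ) (f g : A) :
    Prop :=
  B f g = algebraMap ℚ A c * (f * g)

variable {A : Type*} [CommRing A] [Algebra ℚ A] {B : A → A → A} {f f' g g' h : A} {c c' : ℚ}

namespace HasLogBracket

lemma mul_left (hB : IsLeibnizBracket B) (hf : HasLogBracket B c f h)
    (hf' : HasLogBracket B c' f' h) : HasLogBracket B (c + c') (f * f') h := by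
  rw [HasLogBracket, hB.mul_left, hf, hf', map_add]
  ring

lemma mul_right (hB : IsLeibnizBracket B) (hg : HasLogBracket B c h g)
    (hg' : HasLogBracket B c' h g') : HasLogBracket B (c + c') h (g * g') := by
  rw [HasLogBracket, hB.mul_right, hg, hg', map_add]
  ring

end HasLogBracket

-- In the four brackets of numerators and denominators the terms in `s` and `t` cancel.
lemma hasLogBracket_of_mul_eq (hB : IsLeibnizBracket B) {q r : A} (hq : q * f' = f)
    (hr : r * g' = g) (hf' : IsUnit f') (hg' : IsUnit g') {s s' t t' : A} {c₁ c₂ c₃ c₄ : ℚ}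
    (hfg : B f g = algebraMap ℚ A c₁ * (f * g) + s * g - f * t)
    (hf'g : B f' g = algebraMap ℚ A c₂ * (f' * g) + s' * g - f' * t)
    (hfg' : B f g' = algebraMap ℚ A c₃ * (f * g') + s * g' - f * t')
    (hf'g' : B f' g' = algebraMap ℚ A c₄ * (f' * g') + s' * g' - f' * t') :
    HasLogBracket B (c₁ - c₂ - c₃ + c₄) q r := by
  subst hq hr
  have num_num := hB.mul_left q f' (r * g')
  have num_den := hB.mul_left q f' g'
  have quot_num := hB.mul_right q r g'
  refine (hf'.mul hg').mul_left_cancel ?_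
  simp only [map_add, map_sub]
  linear_combination
    hfg - q * hf'g - r * hfg' + q * r * hf'g' - num_num + r * num_den - f' * quot_num

end LogBrackets

section DeterminantQuotients

variable {K : Type} [Field K] {P : Set Circle1} {n : ℕ} {a a' b b' v : Fin n → P}

lemma EQuot_mul_toQn (h : toZn K P n (Dmat K P n a' v) ∈ nonZeroDivisors (ZnRing K P n)) :
    EQuot K P n a a' v h * toQn K P n (Dmat K P n a' v) = toQn K P n (Dmat K P n a v) := by
  rw [EQuot, Localization.mk_eq_mk']
  exact IsLocalization.mk'_spec _ _ _

lemma isUnit_toQn {f : SwapRing K P} (h : toZn K P n f ∈ nonZeroDivisors (ZnRing K P n)) :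
    IsUnit (toQn K P n f) :=
  IsLocalization.map_units (QnRing K P n) (⟨_, h⟩ : nonZeroDivisors (ZnRing K P n))

variable {Bq : QnRing K P n → QnRing K P n → QnRing K P n}

lemma IsQnBracket.isLeibnizBracket {c₁ c₂ : K} (hB : IsQnBracket K P n c₁ c₂ Bq) :
    IsLeibnizBracket Bq :=
  ⟨hB.2.1, hB.2.2⟩

variable [CharZero K]

lemma IsQnBracket.toQn_Dmat (hB : IsQnBracket K P n 1 0 Bq) {o : Circle1} {c : ℚ}
    (hc : crossTerm K o v a b = algebraMap ℚ _ c * (Dmat K P n a v * Dmat K P n b v)) :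
    Bq (toQn K P n (Dmat K P n a v)) (toQn K P n (Dmat K P n b v)) =
      algebraMap ℚ _ c * (toQn K P n (Dmat K P n a v) * toQn K P n (Dmat K P n b v)) +
        toQn K P n (sideTerm K o v a) * toQn K P n (Dmat K P n b v) -
        toQn K P n (Dmat K P n a v) * toQn K P n (sideTerm K o v b) := by
  rw [hB.1, swapBr_Dmat o, hc]
  simp only [map_sub, map_add, map_mul, RingHom.map_rat_algebraMap]

/-- Up to the order of the entries, `a` consists of at most `N` initial points of each of three
families, `u` of them from the first family and `w` from the third. -/
def HasRowCounts (pts : Fin 3 → ℕ → P) (N : ℕ) (a : Fin n → P) (u w : ℤ) : Prop :=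
  ∃ k : Fin 3 → ℕ, IsInitialRows pts a k ∧ (∀ c, k c ≤ N) ∧ (k 0 : ℤ) = u ∧ (k 2 : ℤ) = w

variable {o : Circle1} {pts : Fin 3 → ℕ → P} {N : ℕ} {u₁ w₁ u₂ w₂ u₁' w₁' u₂' w₂' : ℤ}

lemma HasRowCounts.crossTerm_eq (h : BlockOrdered o pts N) (ha : HasRowCounts pts N a u₁ w₁)
    (hb : HasRowCounts pts N b u₂ w₂) :
    crossTerm K o v a b = algebraMap ℚ _ (1 / 2 * hexWeight (u₂ - u₁) (w₂ - w₁)) *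
      (Dmat K P n a v * Dmat K P n b v) := by
  obtain ⟨k, ha, hk, rfl, rfl⟩ := ha
  obtain ⟨k', hb, hk', rfl, rfl⟩ := hb
  exact crossTerm_fin_three h v ha hb hk hk'

lemma hasLogBracket_EQuot (hB : IsQnBracket K P n 1 0 Bq) (h : BlockOrdered o pts N)
    (ha : HasRowCounts pts N a u₁ w₁) (ha' : HasRowCounts pts N a' u₁' w₁')
    (hb : HasRowCounts pts N b u₂ w₂) (hb' : HasRowCounts pts N b' u₂' w₂')
    (hD : toZn K P n (Dmat K P n a' v) ∈ nonZeroDivisors (ZnRing K P n))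
    (hD' : toZn K P n (Dmat K P n b' v) ∈ nonZeroDivisors (ZnRing K P n)) :
    HasLogBracket Bq
      (1 / 2 * hexWeight (u₂ - u₁) (w₂ - w₁) - 1 / 2 * hexWeight (u₂ - u₁') (w₂ - w₁') -
        1 / 2 * hexWeight (u₂' - u₁) (w₂' - w₁) + 1 / 2 * hexWeight (u₂' - u₁') (w₂' - w₁'))
      (EQuot K P n a a' v hD) (EQuot K P n b b' v hD') :=
  hasLogBracket_of_mul_eq hB.isLeibnizBracket (EQuot_mul_toQn hD) (EQuot_mul_toQn hD')
    (isUnit_toQn hD) (isUnit_toQn hD') (hB.toQn_Dmat (ha.crossTerm_eq h hb))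
    (hB.toQn_Dmat (ha'.crossTerm_eq h hb)) (hB.toQn_Dmat (ha.crossTerm_eq h hb'))
    (hB.toQn_Dmat (ha'.crossTerm_eq h hb'))

end DeterminantQuotients

section TripleRatios

variable {P : Set Circle1} {n : ℕ} {x y z : ℕ → P} {m l p m' l' p' : ℕ}

section RowCounts

variable {i j k : ℕ}

lemma hasRowCounts_rows3s (c : Fin 3) (h : i + j + k + 1 = n)
    (hle : ∀ d, (![i, j, k] + Pi.single c 1 : Fin 3 → ℕ) d ≤ n - 1) {u w : ℤ}
    (hu : ((![i, j, k] + Pi.single c 1 : Fin 3 → ℕ) 0 : ℤ) = u)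
    (hw : ((![i, j, k] + Pi.single c 1 : Fin 3 → ℕ) 2 : ℤ) = w) :
    HasRowCounts ![x, y, z] (n - 1)
      (rows3s x y z i j (![x, y, z] c (![i, j, k] c)) : Fin n → P) u w :=
  ⟨_, isInitialRows_rows3s (k := ![i, j, k]) x y z c h, hle, hu, hw⟩

lemma hasRowCounts_rows3s_thetaTri (x y z : ℕ → P) (hm : 0 < m) (hl : 0 < l) (hp : 0 < p)
    (hs : m + l + p = n) :
    (HasRowCounts ![x, y, z] (n - 1) (rows3s x y z (m + 1) (l - 1) (y (l - 1)) : Fin n → P)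
        (m + 1) (p - 1) ∧
      HasRowCounts ![x, y, z] (n - 1) (rows3s x y z (m + 1) (l - 1) (z (p - 1)) : Fin n → P)
        (m + 1) p) ∧
    (HasRowCounts ![x, y, z] (n - 1) (rows3s x y z (m - 1) (l + 1) (z (p - 1)) : Fin n → P)
        (m - 1) p ∧
      HasRowCounts ![x, y, z] (n - 1) (rows3s x y z (m - 1) (l + 1) (x (m - 1)) : Fin n → P)
        m (p - 1)) ∧
    HasRowCounts ![x, y, z] (n - 1) (rows3s x y z (m - 1) (l - 1) (x (m - 1)) : Fin n → P)
        m (p + 1) ∧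
      HasRowCounts ![x, y, z] (n - 1) (rows3s x y z (m - 1) (l - 1) (y (l - 1)) : Fin n → P)
        (m - 1) (p + 1) := by
  refine ⟨⟨hasRowCounts_rows3s (k := p - 1) 1 ?_ ?_ ?_ ?_,
      hasRowCounts_rows3s (k := p - 1) 2 ?_ ?_ ?_ ?_⟩,
    ⟨hasRowCounts_rows3s (k := p - 1) 2 ?_ ?_ ?_ ?_,
      hasRowCounts_rows3s (k := p - 1) 0 ?_ ?_ ?_ ?_⟩,
    hasRowCounts_rows3s (k := p + 1) 0 ?_ ?_ ?_ ?_,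
    hasRowCounts_rows3s (k := p + 1) 1 ?_ ?_ ?_ ?_⟩ <;>
  first
    | omega
    | simp [Fin.forall_fin_succ] <;> omega

end RowCounts

variable {K : Type} [Field K] [CharZero K] {o : Circle1} {a b v : Fin n → P} {u w u' w' : ℤ}
  {Bq : QnRing K P n → QnRing K P n → QnRing K P n}

lemma hasLogBracket_thetaTri_EQuot (hB : IsQnBracket K P n 1 0 Bq)
    (h : BlockOrdered o ![x, y, z] (n - 1)) (hm : 0 < m) (hl : 0 < l) (hp : 0 < p)
    (hs : m + l + p = n) (ha : HasRowCounts ![x, y, z] (n - 1) a u w)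
    (hb : HasRowCounts ![x, y, z] (n - 1) b u' w')
    (hD₁ : toZn K P n (Dmat K P n (rows3s x y z (m + 1) (l - 1) (z (p - 1))) v)
      ∈ nonZeroDivisors (ZnRing K P n))
    (hD₂ : toZn K P n (Dmat K P n (rows3s x y z (m - 1) (l + 1) (x (m - 1))) v)
      ∈ nonZeroDivisors (ZnRing K P n))
    (hD₃ : toZn K P n (Dmat K P n (rows3s x y z (m - 1) (l - 1) (y (l - 1))) v)
      ∈ nonZeroDivisors (ZnRing K P n))
    (hD : toZn K P n (Dmat K P n b v) ∈ nonZeroDivisors (ZnRing K P n)) :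
    HasLogBracket Bq
      ((if u' = m ∧ w' = p then 1 else 0) - if u = m ∧ w = p then 1 else 0)
      (thetaTri K P n x y z m l p v hD₁ hD₂ hD₃) (EQuot K P n a b v hD) := by
  obtain ⟨⟨num₁, den₁⟩, ⟨num₂, den₂⟩, num₃, den₃⟩ :=
    hasRowCounts_rows3s_thetaTri x y z hm hl hp hs
  have factor₁ := hasLogBracket_EQuot hB h num₁ den₁ ha hb hD₁ hD
  have factor₂ := hasLogBracket_EQuot hB h num₂ den₂ ha hb hD₂ hD
  have factor₃ := hasLogBracket_EQuot hB h num₃ den₃ ha hb hD₃ hD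
  have numerator := congrArg (Int.cast : ℤ → ℚ) (hexWeight_alternating_sum m p u w)
  have denominator := congrArg (Int.cast : ℤ → ℚ) (hexWeight_alternating_sum m p u' w')
  push_cast at numerator denominator
  rw [thetaTri]
  convert (factor₁.mul_left hB.isLeibnizBracket factor₂).mul_left hB.isLeibnizBracket factor₃
    using 1
  split_ifs at numerator denominator ⊢ <;> linarith

theorem bracket_triple_ratios_general (hB : IsQnBracket K P n 1 0 Bq)
    (h : BlockOrdered o ![x, y, z] (n - 1)) (hm : 0 < m) (hl : 0 < l) (hp : 0 < p)
    (hm' : 0 < m') (hl' : 0 < l') (hp' : 0 < p') (hs : m + l + p = n) (hs' : m' + l' + p' = n)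
    (hD₁ : toZn K P n (Dmat K P n (rows3s x y z (m + 1) (l - 1) (z (p - 1))) v)
      ∈ nonZeroDivisors (ZnRing K P n))
    (hD₂ : toZn K P n (Dmat K P n (rows3s x y z (m - 1) (l + 1) (x (m - 1))) v)
      ∈ nonZeroDivisors (ZnRing K P n))
    (hD₃ : toZn K P n (Dmat K P n (rows3s x y z (m - 1) (l - 1) (y (l - 1))) v)
      ∈ nonZeroDivisors (ZnRing K P n))
    (hD₁' : toZn K P n (Dmat K P n (rows3s x y z (m' + 1) (l' - 1) (z (p' - 1))) v)
      ∈ nonZeroDivisors (ZnRing K P n))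
    (hD₂' : toZn K P n (Dmat K P n (rows3s x y z (m' - 1) (l' + 1) (x (m' - 1))) v)
      ∈ nonZeroDivisors (ZnRing K P n))
    (hD₃' : toZn K P n (Dmat K P n (rows3s x y z (m' - 1) (l' - 1) (y (l' - 1))) v)
      ∈ nonZeroDivisors (ZnRing K P n)) :
    Bq (thetaTri K P n x y z m l p v hD₁ hD₂ hD₃)
        (thetaTri K P n x y z m' l' p' v hD₁' hD₂' hD₃') =
      hexSign (m' - m) (p' - p) * (thetaTri K P n x y z m l p v hD₁ hD₂ hD₃ *
        thetaTri K P n x y z m' l' p' v hD₁' hD₂' hD₃') := by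
  obtain ⟨⟨num₁, den₁⟩, ⟨num₂, den₂⟩, num₃, den₃⟩ :=
    hasRowCounts_rows3s_thetaTri x y z hm' hl' hp' hs'
  have factor₁ := hasLogBracket_thetaTri_EQuot hB h hm hl hp hs num₁ den₁ hD₁ hD₂ hD₃ hD₁'
  have factor₂ := hasLogBracket_thetaTri_EQuot hB h hm hl hp hs num₂ den₂ hD₁ hD₂ hD₃ hD₂'
  have factor₃ := hasLogBracket_thetaTri_EQuot hB h hm hl hp hs num₃ den₃ hD₁ hD₂ hD₃ hD₃'
  rw [← map_intCast (algebraMap ℚ (QnRing K P n))]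
  change HasLogBracket Bq (hexSign (m' - m) (p' - p) : ℚ) _ _
  rw [hexSign_sub_sub]
  push_cast
  exact (factor₁.mul_right hB.isLeibnizBracket factor₂).mul_right hB.isLeibnizBracket factor₃

end TripleRatios

/-- With `x_{n-1} ≺ … ≺ x_1 ≺ y_{n-1} ≺ … ≺ y_1 ≺ z_{n-1} ≺ … ≺ z_1`
pairwise distinct points of `P` ordered anticlockwise, and `Θ(m,l,p)` the image of the
`(m,l,p)`-triple ratio of the triangle `xyz`, the normalized extended swapping bracket
`[Θ(m,l,p), Θ(m',l',p')]` (for positive triples summing to `n` with `l ≥ l'`) equals `0`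
when the triples are equal or `l > l'+1`, and when `l = l'+1` it equals `1` if `m = m'`,
`-1` if `m' = m+1`, and `0` otherwise. -/
theorem bracket_triple_ratios (K : Type) [Field K] [CharZero K] (P : Set Circle1)
    (n : ℕ) (hn : 2 ≤ n) (x y z : ℕ → ↥P)
    (hcfg : AnticlockwiseList
      (descPts (fun i => ((x i : Circle1))) (n-1) ++ descPts (fun i => ((y i : Circle1))) (n-1)
        ++ descPts (fun i => ((z i : Circle1))) (n-1)))
    (m l p m' l' p' : ℕ)
    (hm : 0 < m) (hl : 0 < l) (hp : 0 < p) (hm' : 0 < m') (hl' : 0 < l') (hp' : 0 < p')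
    (hs : m + l + p = n) (hs' : m' + l' + p' = n) (hll : l' ≤ l) :
    ∀ Bq : QnRing K P n → QnRing K P n → QnRing K P n, IsQnBracket K P n 1 0 Bq →
    ∀ v : Fin n → ↥P, Function.Injective v →
    ∀ (hA1 : toZn K P n (Dmat K P n (rows3s x y z (m+1) (l-1) (z (p-1))) v)
          ∈ nonZeroDivisors (ZnRing K P n))
      (hA2 : toZn K P n (Dmat K P n (rows3s x y z (m-1) (l+1) (x (m-1))) v)
          ∈ nonZeroDivisors (ZnRing K P n))
      (hA3 : toZn K P n (Dmat K P n (rows3s x y z (m-1) (l-1) (y (l-1))) v)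
          ∈ nonZeroDivisors (ZnRing K P n))
      (hB1 : toZn K P n (Dmat K P n (rows3s x y z (m'+1) (l'-1) (z (p'-1))) v)
          ∈ nonZeroDivisors (ZnRing K P n))
      (hB2 : toZn K P n (Dmat K P n (rows3s x y z (m'-1) (l'+1) (x (m'-1))) v)
          ∈ nonZeroDivisors (ZnRing K P n))
      (hB3 : toZn K P n (Dmat K P n (rows3s x y z (m'-1) (l'-1) (y (l'-1))) v)
          ∈ nonZeroDivisors (ZnRing K P n)),
      (((m = m' ∧ l = l' ∧ p = p') ∨ l' + 1 < l) →
        Bq (thetaTri K P n x y z m l p v hA1 hA2 hA3)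
           (thetaTri K P n x y z m' l' p' v hB1 hB2 hB3) = 0) ∧
      (l = l' + 1 →
        ((m = m' →
          Bq (thetaTri K P n x y z m l p v hA1 hA2 hA3)
             (thetaTri K P n x y z m' l' p' v hB1 hB2 hB3)
            = thetaTri K P n x y z m l p v hA1 hA2 hA3
              * thetaTri K P n x y z m' l' p' v hB1 hB2 hB3) ∧
         (m' = m + 1 →
          Bq (thetaTri K P n x y z m l p v hA1 hA2 hA3)
             (thetaTri K P n x y z m' l' p' v hB1 hB2 hB3)
            = - (thetaTri K P n x y z m l p v hA1 hA2 hA3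
                * thetaTri K P n x y z m' l' p' v hB1 hB2 hB3)) ∧
         (m ≠ m' ∧ m' ≠ m + 1 →
          Bq (thetaTri K P n x y z m l p v hA1 hA2 hA3)
             (thetaTri K P n x y z m' l' p' v hB1 hB2 hB3) = 0))) := by
  intro Bq hB v _ hA1 hA2 hA3 hB1 hB2 hB3
  obtain ⟨o, ho⟩ := exists_blockOrdered_of_anticlockwiseList hcfg
  have bracket := bracket_triple_ratios_general hB ho hm hl hp hm' hl' hp' hs hs' hA1 hA2 hA3
    hB1 hB2 hB3
  refine ⟨fun h => ?_, fun h => ⟨fun h' => ?_, fun h' => ?_, fun h' => ?_⟩⟩ <;> rw [bracket]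
  · rw [show hexSign (m' - m) (p' - p) = 0 by grind [hexSign], Int.cast_zero, zero_mul]
  · rw [show hexSign (m' - m) (p' - p) = 1 by grind [hexSign], Int.cast_one, one_mul]
  · rw [show hexSign (m' - m) (p' - p) = -1 by grind [hexSign], Int.cast_neg, Int.cast_one,
      neg_one_mul]
  · rw [show hexSign (m' - m) (p' - p) = 0 by grind [hexSign], Int.cast_zero, zero_mul]

end
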